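/- Let G = G_{-1} ⊕ G_0 ⊕ G_1 be a local Lie algebra over a field K, i.e. G_0 is a Lie algebra, G_{±1} are G_0-modules, and there is a G_0-equivariant bilinear bracket G_{-1} × G_1 → G_0 satisfying the Jacobi identity whenever it makes sense. Then there exists a Z-graded Lie algebra L_max(G) whose underlying graded space is Free(G_{-1}) ⊕ G_0 ⊕ Free(G_1) (Free denoting the free Lie algebra, graded by extending the degrees ±1), whose local part L_{-1} ⊕ L_0 ⊕ L_1 is G, and whose bracket extends the given local bracket. -/

import Mathlib

/-- A local Lie algebra `G = Gneg ⊕ Gzero ⊕ G₁`: `Gzero` is a Lie algebra, `Gneg` and `Gpos`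
are `Gzero`-modules, and there is a `Gzero`-equivariant bracket `Gneg × Gpos → Gzero`.
(These data encode exactly the brackets on pairs of degrees `(i,j)` with
`i, j, i+j ∈ {-1,0,1}`, and the equivariance is the Jacobi identity in the only
case not already covered by the Lie algebra and module axioms.) -/
structure LocalLieData (K Gneg Gzero Gpos : Type) [Field K]
    [LieRing Gzero] [LieAlgebra K Gzero]
    [AddCommGroup Gneg] [Module K Gneg] [LieRingModule Gzero Gneg] [LieModule K Gzero Gneg]
    [AddCommGroup Gpos] [Module K Gpos] [LieRingModule Gzero Gpos] [LieModule K Gzero Gpos] where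
  br : Gneg →ₗ[K] Gpos →ₗ[K] Gzero
  equivariant : ∀ (x : Gzero) (a : Gneg) (b : Gpos),
    ⁅x, br a b⁆ = br ⁅x, a⁆ b + br a ⁅x, b⁆

/-- A realization of the maximal `ℤ`-graded Lie algebra `L_max(G)` on the local
Lie algebra `G`: a `ℤ`-graded Lie algebra whose local part `L₋₁ ⊕ L₀ ⊕ L₁` is
`G` (with the bracket extending the given local bracket), and whose underlying
graded space is `Free(Gneg) ⊕ Gzero ⊕ Free(Gpos)`, i.e. the positive (resp. negative)
part is the free Lie algebra on `Gpos` (resp. `Gneg`). -/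
structure MaxGradedExtension (K Gneg Gzero Gpos : Type) [Field K]
    [LieRing Gzero] [LieAlgebra K Gzero]
    [AddCommGroup Gneg] [Module K Gneg] [LieRingModule Gzero Gneg] [LieModule K Gzero Gneg]
    [AddCommGroup Gpos] [Module K Gpos] [LieRingModule Gzero Gpos] [LieModule K Gzero Gpos]
    (D : LocalLieData K Gneg Gzero Gpos) where
  L : Type
  [lieRing : LieRing L]
  [lieAlgebra : LieAlgebra K L]
  comp : ℤ → Submodule K L
  isInternal : DirectSum.IsInternal comp
  graded_bracket : ∀ n m : ℤ, ∀ x ∈ comp n, ∀ y ∈ comp m, ⁅x, y⁆ ∈ comp (n + m)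
  /-- The local part of `L` is identified with `G`. -/
  eneg : Gneg ≃ₗ[K] comp (-1)
  ezero : Gzero ≃ₗ[K] comp 0
  epos : Gpos ≃ₗ[K] comp 1
  zero_bracket : ∀ x y : Gzero, ((ezero ⁅x, y⁆ : comp 0) : L) = ⁅((ezero x : comp 0) : L), ((ezero y : comp 0) : L)⁆
  act_neg : ∀ (x : Gzero) (a : Gneg), ((eneg ⁅x, a⁆ : comp (-1)) : L) = ⁅((ezero x : comp 0) : L), ((eneg a : comp (-1)) : L)⁆
  act_pos : ∀ (x : Gzero) (b : Gpos), ((epos ⁅x, b⁆ : comp 1) : L) = ⁅((ezero x : comp 0) : L), ((epos b : comp 1) : L)⁆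
  br_compat : ∀ (a : Gneg) (b : Gpos), ((ezero (D.br a b) : comp 0) : L) = ⁅((eneg a : comp (-1)) : L), ((epos b : comp 1) : L)⁆
  /-- The positive part is generated by the degree-one component … -/
  pos_gen : ∀ n : ℤ, 1 ≤ n → ∀ x ∈ comp n,
    x ∈ LieSubalgebra.lieSpan K L ((comp 1 : Submodule K L) : Set L)
  /-- … on which it is free: `⊕_{n ≥ 1} Lₙ = Free(Gpos)`. -/
  pos_free : ∀ (A : Type) [LieRing A] [LieAlgebra K A] (φ : Gpos →ₗ[K] A),
    ∃! g : (LieSubalgebra.lieSpan K L ((comp 1 : Submodule K L) : Set L)) →ₗ⁅K⁆ A,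
      ∀ b : Gpos, g ⟨((epos b : comp 1) : L),
        LieSubalgebra.subset_lieSpan (epos b).2⟩ = φ b
  /-- The negative part is generated by the degree-minus-one component … -/
  neg_gen : ∀ n : ℤ, n ≤ -1 → ∀ x ∈ comp n,
    x ∈ LieSubalgebra.lieSpan K L ((comp (-1) : Submodule K L) : Set L)
  /-- … on which it is free: `⊕_{n ≤ -1} Lₙ = Free(Gneg)`. -/
  neg_free : ∀ (A : Type) [LieRing A] [LieAlgebra K A] (φ : Gneg →ₗ[K] A),
    ∃! g : (LieSubalgebra.lieSpan K L ((comp (-1) : Submodule K L) : Set L)) →ₗ⁅K⁆ A,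
      ∀ a : Gneg, g ⟨((eneg a : comp (-1)) : L),
        LieSubalgebra.subset_lieSpan (eneg a).2⟩ = φ a

/-!
Write `H₋ = Free(Gneg) ⋊ Gzero` and `H₊ = Free(Gpos) ⋊ Gzero`. In the maximal extension a generator
`a` of degree `-1` has to act on `H₋` by its adjoint action, and on `Free(Gpos)` by the derivation
into `H₊` which extends `br a`. Since `Free(Gneg)` is free, this determines a representation of `H₋`
on `Free(Gneg) ⊕ Gzero ⊕ Free(Gpos)`; exchanging the degrees `-1` and `1` gives one of `H₊`, and the
two combine to a linear map `adj` from the sum to its endomorphisms. The Jacobi identity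
`adj (adj v w) = ⁅adj v, adj w⁆` and the antisymmetry of `adj v w` are both inherited from `v₁` and
`v₂` by `adj v₁ v₂`, so it is enough to take for `v` an element of the local part. What remains is
the relation `⁅adj a, adj b⁆ = adj (br a b)` for generators `a` and `b` of degrees `-1` and `1`, and
this is the equivariance of `br`.

The homogeneous components of a free Lie algebra are independent, in every characteristic, because
`x ↦ tⁿ ⊗ x` for `x` of degree `n` comes from a homomorphism to the loop algebra.
-/

noncomputable section

attribute [local instance] LieRing.ofAssociativeRing LieAlgebra.ofAssociativeAlgebra

open LieAlgebra

theorem lie_end_apply {R V : Type*} [Ring R] [AddCommGroup V] [Module R V]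
    (f g : Module.End R V) (v : V) : ⁅f, g⁆ v = f (g v) - g (f v) :=
  rfl

section independence

variable {R V W I : Type*} [Ring R] [AddCommGroup V] [Module R V] [AddCommGroup W] [Module R W]

theorem iSupIndep_of_eq_single {p : I → Submodule R V} (c : V →ₗ[R] I →₀ V)
    (hc : ∀ i, ∀ x ∈ p i, c x = Finsupp.single i x) : iSupIndep p := by
  refine iSupIndep_def.2 fun i ↦ Submodule.disjoint_def.2 fun x hx hx' ↦ ?_
  have hle : ⨆ j, ⨆ (_ : j ≠ i), p j ≤ (Finsupp.lapply i ∘ₗ c).ker :=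
    iSup₂_le fun j hj y hy ↦ by
      rw [LinearMap.mem_ker, LinearMap.comp_apply, hc j y hy, Finsupp.lapply_apply,
        Finsupp.single_eq_of_ne hj.symm]
  simpa [hc i x hx] using hle hx'

variable [DecidableEq I]

theorem isInternal_prod {p : I → Submodule R V} {q : I → Submodule R W}
    (hp : DirectSum.IsInternal p) (hq : DirectSum.IsInternal q) :
    DirectSum.IsInternal fun i ↦ (p i).prod (q i) := by
  rw [DirectSum.isInternal_submodule_iff_iSupIndep_and_iSup_eq_top] at hp hq ⊢
  refine ⟨iSupIndep_def.2 fun i ↦ ?_, ?_⟩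
  · have hle : ⨆ j, ⨆ (_ : j ≠ i), (p j).prod (q j) ≤
        (⨆ j, ⨆ (_ : j ≠ i), p j).prod (⨆ j, ⨆ (_ : j ≠ i), q j) :=
      iSup₂_le fun j hj ↦ Submodule.prod_mono (le_iSup₂_of_le j hj le_rfl)
        (le_iSup₂_of_le j hj le_rfl)
    refine Disjoint.mono_right hle ?_
    rw [disjoint_iff, Submodule.prod_inf_prod, (hp.1 i).eq_bot, (hq.1 i).eq_bot,
      Submodule.prod_bot]
  · rw [eq_top_iff, ← Submodule.prod_top, ← hp.2, ← hq.2, Submodule.prod_le_iff, Submodule.map_iSup,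
      Submodule.map_iSup]
    exact ⟨iSup_mono fun i ↦ Submodule.map_le_iff_le_comap.2 fun x hx ↦ ⟨hx, zero_mem _⟩,
      iSup_mono fun i ↦ Submodule.map_le_iff_le_comap.2 fun y hy ↦ ⟨zero_mem _, hy⟩⟩

theorem isInternal_comp_equiv {J : Type*} [DecidableEq J] {p : I → Submodule R V}
    (hp : DirectSum.IsInternal p) (e : J ≃ I) : DirectSum.IsInternal (p ∘ e) := by
  rw [DirectSum.isInternal_submodule_iff_iSupIndep_and_iSup_eq_top] at hp ⊢
  exact ⟨hp.1.comp e.injective, (e.iSup_comp (g := p)).trans hp.2⟩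

/-- The grading of a module concentrated in degree `i`. -/
def concentrated (R V : Type*) {I : Type*} [Ring R] [AddCommGroup V] [Module R V] [DecidableEq I]
    (i j : I) : Submodule R V :=
  if j = i then ⊤ else ⊥

theorem mem_concentrated {i j : I} {x : V} : x ∈ concentrated R V i j ↔ j = i ∨ x = 0 := by
  unfold concentrated
  split_ifs with hj <;> simp [hj]

theorem isInternal_concentrated (i : I) : DirectSum.IsInternal (concentrated R V i) := by
  rw [DirectSum.isInternal_submodule_iff_iSupIndep_and_iSup_eq_top]
  refine ⟨iSupIndep_of_eq_single (Finsupp.lsingle i) fun j x hx ↦ ?_,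
    eq_top_iff.2 (le_iSup_of_le i (if_pos rfl).ge)⟩
  by_cases hj : j = i
  · rw [hj, Finsupp.lsingle_apply]
  · rw [concentrated, if_neg hj, Submodule.mem_bot] at hx
    rw [hx, map_zero, Finsupp.single_zero]

theorem concentrated_neg {A : Type*} [AddGroup A] [DecidableEq A] (a : A) :
    concentrated R V 0 (-a) = concentrated R V 0 a := by
  simp only [concentrated, neg_eq_zero]

end independence

section semidirect

open LieModule.Cohomology

variable {R L W : Type*} [CommRing R] [LieRing L] [LieAlgebra R L]
  [AddCommGroup W] [Module R W] [LieRingModule L W] [LieModule R L W]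

variable (R L W) in
/-- The semidirect product of a Lie algebra `L` and an `L`-module `W`, encoded as the extension of
`L` by `W` with zero cocycle. -/
abbrev Semidirect : Type _ :=
  ofTwoCocycle (0 : twoCocycle R L W)

namespace Semidirect

variable (R L W) in
/-- The projection to the Lie algebra. -/
def fst : Semidirect R L W →ₗ⁅R⁆ L where
  toFun u := u.carrier.1
  map_add' _ _ := rfl
  map_smul' _ _ := rfl
  map_lie' := rfl

variable (R L W) in
/-- The projection to the module. -/
def snd : Semidirect R L W →ₗ[R] W where
  toFun u := u.carrier.2
  map_add' _ _ := rfl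
  map_smul' _ _ := rfl

theorem snd_lie (u v : Semidirect R L W) :
    snd R L W ⁅u, v⁆ = ⁅fst R L W u, snd R L W v⁆ - ⁅fst R L W v, snd R L W u⁆ :=
  congrArg (· - ⁅fst R L W v, snd R L W u⁆) (zero_add ⁅fst R L W u, snd R L W v⁆)

/-- The linear map to the semidirect product with given components. -/
def pair {M : Type*} [AddCommGroup M] [Module R M] (i : M →ₗ[R] L) (f : M →ₗ[R] W) :
    M →ₗ[R] Semidirect R L W where
  toFun a := ⟨(i a, f a)⟩
  map_add' a b := congrArg (ofProd 0) (Prod.ext (map_add i a b) (map_add f a b))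
  map_smul' c a := congrArg (ofProd 0) (Prod.ext (map_smul i c a) (map_smul f c a))

/-- The derivation `L → W` given by a section of the semidirect product of `L` and `W`. -/
def derivationOfSection (s : L →ₗ⁅R⁆ Semidirect R L W)
    (hs : (fst R L W).comp s = LieHom.id) : LieDerivation R L W where
  __ := snd R L W ∘ₗ (s : L →ₗ[R] Semidirect R L W)
  leibniz' x y := by
    have hfst (z : L) : fst R L W (s z) = z := LieHom.congr_fun hs z
    calc snd R L W (s ⁅x, y⁆)
      _ = snd R L W ⁅s x, s y⁆ := congrArg (snd R L W) (s.map_lie x y)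
      _ = ⁅fst R L W (s x), snd R L W (s y)⁆ - ⁅fst R L W (s y), snd R L W (s x)⁆ := snd_lie _ _
      _ = ⁅x, snd R L W (s y)⁆ - ⁅y, snd R L W (s x)⁆ := by rw [hfst, hfst]

end Semidirect

end semidirect

/-- The linear relations to be imposed on the free Lie algebra on the set `M`, turning `M` into a
module of generators. -/
def FreeLie.linearRelations (R M : Type*) [CommRing R] [AddCommGroup M] [Module R M] :
    LieIdeal R (FreeLieAlgebra R M) :=
  LieSubmodule.lieSpan R (FreeLieAlgebra R M)
    ({x | ∃ a b,
        FreeLieAlgebra.of R (a + b) - (FreeLieAlgebra.of R a + FreeLieAlgebra.of R b) = x} ∪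
      {x | ∃ (c : R) (a : M), FreeLieAlgebra.of R (c • a) - c • FreeLieAlgebra.of R a = x})

/-- The free Lie algebra on an `R`-module `M` (Mathlib's `FreeLieAlgebra` is free on a set). -/
def FreeLie (R M : Type*) [CommRing R] [AddCommGroup M] [Module R M] : Type _ :=
  FreeLieAlgebra R M ⧸ FreeLie.linearRelations R M

namespace FreeLie

variable {R M : Type*} [CommRing R] [AddCommGroup M] [Module R M]

instance : LieRing (FreeLie R M) :=
  inferInstanceAs (LieRing (FreeLieAlgebra R M ⧸ linearRelations R M))

instance : LieAlgebra R (FreeLie R M) :=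
  inferInstanceAs (LieAlgebra R (FreeLieAlgebra R M ⧸ linearRelations R M))

/-- The quotient map from the free Lie algebra on the set `M`. -/
def mk : FreeLieAlgebra R M →ₗ⁅R⁆ FreeLie R M where
  __ := (LieSubmodule.Quotient.mk' (linearRelations R M)).toLinearMap
  map_lie' {x y} := LieSubmodule.Quotient.mk_bracket (linearRelations R M) x y

theorem mk_surjective : Function.Surjective (mk : FreeLieAlgebra R M →ₗ⁅R⁆ FreeLie R M) :=
  LieSubmodule.Quotient.surjective_mk' _

variable (R M) in
/-- The inclusion of the generators. -/
def ι : M →ₗ[R] FreeLie R M where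
  toFun a := mk (FreeLieAlgebra.of R a)
  map_add' a b := by
    rw [← map_add, ← sub_eq_zero, ← map_sub]
    exact LieSubmodule.Quotient.mk_eq_zero'.2 (LieSubmodule.subset_lieSpan (Or.inl ⟨a, b, rfl⟩))
  map_smul' c a := by
    rw [RingHom.id_apply, ← map_smul, ← sub_eq_zero, ← map_sub]
    exact LieSubmodule.Quotient.mk_eq_zero'.2 (LieSubmodule.subset_lieSpan (Or.inr ⟨c, a, rfl⟩))

section lift

variable {L : Type*} [LieRing L] [LieAlgebra R L]

theorem linearRelations_le_ker (f : M →ₗ[R] L) :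
    linearRelations R M ≤ (FreeLieAlgebra.lift R f).ker := by
  rw [linearRelations, LieSubmodule.lieSpan_le]
  rintro _ (⟨a, b, rfl⟩ | ⟨c, a, rfl⟩) <;> simp [FreeLieAlgebra.lift_of_apply]

/-- The extension of a linear map to a Lie algebra homomorphism. -/
def lift (f : M →ₗ[R] L) : FreeLie R M →ₗ⁅R⁆ L where
  __ := (linearRelations R M).toSubmodule.liftQ (FreeLieAlgebra.lift R f).toLinearMap
    (linearRelations_le_ker f)
  map_lie' {x y} := by
    obtain ⟨x, rfl⟩ := mk_surjective x
    obtain ⟨y, rfl⟩ := mk_surjective y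
    exact LieHom.map_lie (FreeLieAlgebra.lift R f) x y

@[simp]
theorem lift_ι (f : M →ₗ[R] L) (a : M) : lift f (ι R M a) = f a :=
  FreeLieAlgebra.lift_of_apply f a

theorem hom_ext {f g : FreeLie R M →ₗ⁅R⁆ L} (h : ∀ a, f (ι R M a) = g (ι R M a)) : f = g := by
  have hmk : f.comp mk = g.comp mk := FreeLieAlgebra.hom_ext h
  ext x
  obtain ⟨x, rfl⟩ := mk_surjective x
  exact LieHom.congr_fun hmk x

end lift

theorem lieSpan_range_ι : LieSubalgebra.lieSpan R (FreeLie R M) (Set.range (ι R M)) = ⊤ := by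
  set S := LieSubalgebra.lieSpan R (FreeLie R M) (Set.range (ι R M))
  have hS : S.incl.comp (lift ((ι R M).codRestrict S.toSubmodule fun a ↦
      LieSubalgebra.subset_lieSpan ⟨a, rfl⟩)) = LieHom.id :=
    hom_ext fun a ↦ by
      rw [LieHom.comp_apply, lift_ι]
      rfl
  refine eq_top_iff.2 fun x _ ↦ ?_
  rw [← LieHom.id_apply (R := R) x, ← hS]
  exact Subtype.property _

@[elab_as_elim]
theorem induction {P : FreeLie R M → Prop} (ι : ∀ a, P (FreeLie.ι R M a)) (zero : P 0)
    (add : ∀ x y, P x → P y → P (x + y)) (smul : ∀ (c : R) x, P x → P (c • x))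
    (lie : ∀ x y, P x → P y → P ⁅x, y⁆) (x : FreeLie R M) : P x := by
  have hx : x ∈ LieSubalgebra.lieSpan R (FreeLie R M) (Set.range (FreeLie.ι R M)) :=
    lieSpan_range_ι (R := R) (M := M) ▸ LieSubalgebra.mem_top x
  induction hx using LieSubalgebra.lieSpan_induction with
  | mem _ h => obtain ⟨a, rfl⟩ := h; exact ι a
  | zero => exact zero
  | add x y _ _ hx hy => exact add x y hx hy
  | smul c x _ hx => exact smul c x hx
  | lie x y _ _ hx hy => exact lie x y hx hy

section derivation

variable {W : Type*} [AddCommGroup W] [Module R W] [LieRingModule (FreeLie R M) W]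
  [LieModule R (FreeLie R M) W]

/-- The derivation of the free Lie algebra on `M` into a module `W` with prescribed values on the
generators. -/
def derivation (f : M →ₗ[R] W) : LieDerivation R (FreeLie R M) W :=
  Semidirect.derivationOfSection (lift (Semidirect.pair (ι R M) f)) <|
    hom_ext fun a ↦ congrArg (Semidirect.fst R _ W) (lift_ι _ a)

@[simp]
theorem derivation_ι (f : M →ₗ[R] W) (a : M) : derivation f (ι R M a) = f a :=
  congrArg (Semidirect.snd R _ W) (lift_ι (Semidirect.pair (ι R M) f) a)

theorem derivation_ext {d e : LieDerivation R (FreeLie R M) W}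
    (h : ∀ a, d (ι R M a) = e (ι R M a)) : d = e :=
  LieDerivation.ext_of_lieSpan_eq_top _ lieSpan_range_ι (Set.forall_mem_range.2 h)

end derivation

theorem ι_injective : Function.Injective (ι R M) := by
  let e := TrivialLieModule.equiv R (FreeLie R M) M
  intro a b hab
  have h := congrArg (derivation e.symm.toLinearMap) hab
  simpa using h

section act

variable {G : Type*} [LieRing G] [LieAlgebra R G] [LieRingModule G M] [LieModule R G M]

variable (R G M) in
/-- The action of a Lie algebra `G` by derivations on the free Lie algebra of a `G`-module. -/
def act : G →ₗ⁅R⁆ LieDerivation R (FreeLie R M) (FreeLie R M) where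
  toFun g := derivation (ι R M ∘ₗ LieModule.toEnd R G M g)
  map_add' g h := derivation_ext fun a ↦ by simp
  map_smul' c g := derivation_ext fun a ↦ by simp
  map_lie' {g h} := derivation_ext fun a ↦ by simp

@[simp]
theorem act_ι (g : G) (a : M) : act R M G g (ι R M a) = ι R M ⁅g, a⁆ :=
  derivation_ι _ a

end act

section grade

variable (R M) in
/-- The homogeneous component of degree `n` of the free Lie algebra, spanned by the right-normed
brackets of `n` generators. -/
def natGrade : ℕ → Submodule R (FreeLie R M)
  | 0 => ⊥
  | 1 => (ι R M).range
  | n + 2 => Submodule.map₂ (LieModule.toEnd R (FreeLie R M) (FreeLie R M)).toLinearMap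
      (ι R M).range (natGrade (n + 1))

variable (R M) in
/-- The grading of the free Lie algebra indexed by the integers, trivial in degrees `n ≤ 0`. -/
def grade (n : ℤ) : Submodule R (FreeLie R M) :=
  natGrade R M n.toNat

theorem grade_of_nonpos {n : ℤ} (hn : n ≤ 0) : grade R M n = ⊥ := by
  rw [grade, Int.toNat_of_nonpos hn, natGrade]

theorem grade_one : grade R M 1 = (ι R M).range :=
  rfl

theorem ι_mem_grade (a : M) : ι R M a ∈ grade R M 1 :=
  ⟨a, rfl⟩

theorem lie_ι_mem_grade (a : M) {n : ℤ} {x : FreeLie R M} (hx : x ∈ grade R M n) :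
    ⁅ι R M a, x⁆ ∈ grade R M (1 + n) := by
  match n with
  | .ofNat (k + 1) =>
    rw [add_comm]
    exact Submodule.apply_mem_map₂ (LieModule.toEnd R (FreeLie R M) (FreeLie R M)).toLinearMap
      (ι_mem_grade a) hx
  | .ofNat 0 | .negSucc _ =>
    rw [(Submodule.mem_bot R).1 hx, lie_zero]
    exact zero_mem _

@[elab_as_elim]
theorem grade_induction {P : ∀ (n : ℤ) (x : FreeLie R M), x ∈ grade R M n → Prop}
    (ι : ∀ a, P 1 (FreeLie.ι R M a) (ι_mem_grade a)) (zero : ∀ n, P n 0 (zero_mem _))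
    (add : ∀ n x y hx hy, P n x hx → P n y hy → P n (x + y) (add_mem hx hy))
    (smul : ∀ n (c : R) x hx, P n x hx → P n (c • x) (Submodule.smul_mem _ c hx))
    (lie : ∀ n a x hx, P n x hx → P (1 + n) ⁅FreeLie.ι R M a, x⁆ (lie_ι_mem_grade a hx))
    {n : ℤ} {x : FreeLie R M} (hx : x ∈ grade R M n) : P n x hx := by
  let S (n : ℤ) : Submodule R (FreeLie R M) :=
    { carrier := {x | ∃ hx, P n x hx}
      zero_mem' := ⟨_, zero n⟩
      add_mem' := fun ⟨_, hx⟩ ⟨_, hy⟩ ↦ ⟨_, add n _ _ _ _ hx hy⟩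
      smul_mem' := fun c _ ⟨_, hx⟩ ↦ ⟨_, smul n c _ _ hx⟩ }
  have hS (k : ℕ) : grade R M (k + 1 : ℕ) ≤ S (k + 1 : ℕ) := by
    induction k with
    | zero =>
      rintro _ ⟨a, rfl⟩
      exact ⟨_, ι a⟩
    | succ k ih =>
      refine Submodule.map₂_le.2 ?_
      rintro _ ⟨a, rfl⟩ y hy
      obtain ⟨hy, hPy⟩ := ih hy
      rw [Nat.cast_succ, add_comm]
      exact ⟨_, lie _ a y hy hPy⟩
  match n with
  | .ofNat (k + 1) => exact (hS k hx).2
  | .ofNat 0 | .negSucc _ =>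
    obtain rfl := (Submodule.mem_bot R).1 hx
    exact zero _

theorem lie_mem_grade {i j : ℤ} {x y : FreeLie R M} (hx : x ∈ grade R M i)
    (hy : y ∈ grade R M j) : ⁅x, y⁆ ∈ grade R M (i + j) := by
  induction hx using grade_induction generalizing j y with
  | ι a => exact lie_ι_mem_grade a hy
  | zero i => rw [zero_lie]; exact zero_mem _
  | add i x x' _ _ hx hx' => rw [add_lie]; exact add_mem (hx hy) (hx' hy)
  | smul i c x _ hx => rw [smul_lie]; exact Submodule.smul_mem _ c (hx hy)
  | lie i a x _ ih =>
    rw [lie_lie]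
    refine sub_mem ?_ ?_
    · rw [add_assoc]
      exact lie_ι_mem_grade a (ih hy)
    · rw [add_comm 1 i, add_assoc]
      exact ih (lie_ι_mem_grade a hy)

theorem iSup_grade : ⨆ n, grade R M n = ⊤ := by
  refine eq_top_iff.2 fun x _ ↦ ?_
  induction x using FreeLie.induction with
  | ι a => exact Submodule.mem_iSup_of_mem 1 (ι_mem_grade a)
  | zero => exact zero_mem _
  | add x y hx hy => exact add_mem (hx trivial) (hy trivial)
  | smul c x hx => exact Submodule.smul_mem _ c (hx trivial)
  | lie x y hx hy =>
    have hlie : Submodule.map₂ (LieModule.toEnd R (FreeLie R M) (FreeLie R M)).toLinearMap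
        (⨆ i, grade R M i) (⨆ j, grade R M j) ≤ ⨆ n, grade R M n := by
      rw [Submodule.map₂_iSup_left]
      refine iSup_le fun i ↦ ?_
      rw [Submodule.map₂_iSup_right]
      exact iSup_le fun j ↦ le_iSup_of_le (i + j) (Submodule.map₂_le.2 fun _ hx _ hy ↦
        lie_mem_grade hx hy)
    exact hlie (Submodule.apply_mem_map₂ _ (hx trivial) (hy trivial))

open scoped TensorProduct

variable (R M) in
/-- The homomorphism `x ↦ tⁿ ⊗ x` (for `x` homogeneous of degree `n`) to the loop algebra. -/
def toLoop : FreeLie R M →ₗ⁅R⁆ LieAlgebra.loopAlgebra R ℤ (FreeLie R M) :=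
  lift (TensorProduct.mk R (AddMonoidAlgebra R ℤ) (FreeLie R M) (AddMonoidAlgebra.single 1 1) ∘ₗ
    ι R M)

theorem toLoop_of_mem_grade {n : ℤ} {x : FreeLie R M} (hx : x ∈ grade R M n) :
    toLoop R M x = AddMonoidAlgebra.single n 1 ⊗ₜ x := by
  induction hx using grade_induction with
  | ι a => exact lift_ι _ a
  | zero n => rw [map_zero, TensorProduct.tmul_zero]
  | add n x y _ _ hx hy => rw [map_add, hx, hy, TensorProduct.tmul_add]
  | smul n c x _ hx => rw [map_smul, hx, TensorProduct.tmul_smul]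
  | lie n a x _ hx =>
    rw [LieHom.map_lie, hx, toLoop, lift_ι]
    refine (LieAlgebra.ExtendScalars.bracket_tmul ..).trans ?_
    rw [AddMonoidAlgebra.single_mul_single, one_mul]

theorem isInternal_grade : DirectSum.IsInternal (grade R M) := by
  refine (DirectSum.isInternal_submodule_iff_iSupIndep_and_iSup_eq_top _).2 ⟨?_, iSup_grade⟩
  refine iSupIndep_of_eq_single
    ((LieAlgebra.LoopAlgebra.toFinsupp R ℤ (FreeLie R M)).toLinearMap ∘ₗ toLoop R M) ?_
  intro n x hx
  change LieAlgebra.LoopAlgebra.toFinsupp R ℤ (FreeLie R M) (toLoop R M x) = _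
  rw [toLoop_of_mem_grade hx, LieAlgebra.LoopAlgebra.toFinsupp_single_tmul]

theorem derivation_mem {W : Type*} [AddCommGroup W] [Module R W] [LieRingModule (FreeLie R M) W]
    [LieModule R (FreeLie R M) W] (d : LieDerivation R (FreeLie R M) W) {T : ℤ → Submodule R W}
    (hT : ∀ i j x w, x ∈ grade R M i → w ∈ T j → ⁅x, w⁆ ∈ T (i + j)) {s : ℤ}
    (hd : ∀ a, d (ι R M a) ∈ T (1 + s)) {n : ℤ} {x : FreeLie R M} (hx : x ∈ grade R M n) :
    d x ∈ T (n + s) := by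
  induction hx using grade_induction with
  | ι a => exact hd a
  | zero n => rw [map_zero]; exact zero_mem _
  | add n x y _ _ hx hy => rw [map_add]; exact add_mem hx hy
  | smul n c x _ hx => rw [map_smul]; exact Submodule.smul_mem _ c hx
  | lie n a x hx ih =>
    rw [LieDerivation.apply_lie_eq_sub]
    refine sub_mem ?_ ?_
    · rw [add_assoc]
      exact hT 1 (n + s) _ _ (ι_mem_grade a) ih
    · rw [add_comm 1 n, add_assoc]
      exact hT n (1 + s) _ _ hx (hd a)

end grade

section range

variable {L : Type*} [LieRing L] [LieAlgebra R L]

theorem lieSpan_range_comp_ι (j : FreeLie R M →ₗ⁅R⁆ L) :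
    LieSubalgebra.lieSpan R L ((j : FreeLie R M →ₗ[R] L) ∘ₗ ι R M).range = j.range := by
  rw [LieHom.range_eq_map, ← lieSpan_range_ι, LieSubalgebra.map_lieSpan, ← Set.range_comp]
  rfl

theorem existsUnique_hom_of_eq_range {j : FreeLie R M →ₗ⁅R⁆ L} (hj : Function.Injective j)
    {S : LieSubalgebra R L} (hS : S = j.range) {A : Type*} [LieRing A] [LieAlgebra R A]
    (φ : M →ₗ[R] A) :
    ∃! g : S →ₗ⁅R⁆ A, ∀ a, g ⟨j (ι R M a), hS ▸ ⟨ι R M a, rfl⟩⟩ = φ a := by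
  subst hS
  let e := LieEquiv.ofInjective j hj
  refine ⟨(lift φ).comp e.symm.toLieHom, fun a ↦ ?_, fun g hg ↦ ?_⟩
  · exact (congrArg (lift φ) (e.symm_apply_apply (ι R M a))).trans (lift_ι φ a)
  · have hge : g.comp e.toLieHom = lift φ := hom_ext fun a ↦ (hg a).trans (lift_ι φ a).symm
    ext x
    obtain ⟨y, rfl⟩ := e.surjective x
    exact (LieHom.congr_fun hge y).trans (congrArg (lift φ) (e.symm_apply_apply y).symm)

end range

end FreeLie

section HalfLie

variable {R G M : Type*} [CommRing R] [LieRing G] [LieAlgebra R G] [AddCommGroup M] [Module R M]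
  [LieRingModule G M] [LieModule R G M]

variable (R G M) in
/-- The semidirect product of `G` with the free Lie algebra on a `G`-module `M`: the nonnegative
(or nonpositive) half of the maximal graded extension. -/
def HalfLie : Type _ :=
  FreeLie R M ⋊⁅FreeLie.act R M G⁆ G

namespace HalfLie

instance : LieRing (HalfLie R G M) :=
  inferInstanceAs (LieRing (FreeLie R M ⋊⁅FreeLie.act R M G⁆ G))

instance : LieAlgebra R (HalfLie R G M) :=
  inferInstanceAs (LieAlgebra R (FreeLie R M ⋊⁅FreeLie.act R M G⁆ G))

variable (R G M) in
/-- The inclusion of the free Lie algebra. -/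
def inl : FreeLie R M →ₗ⁅R⁆ HalfLie R G M :=
  SemiDirectSum.inl _

variable (R G M) in
/-- The inclusion of the degree-zero part. -/
def inr : G →ₗ⁅R⁆ HalfLie R G M :=
  SemiDirectSum.inr _

@[simp]
theorem inl_left (x : FreeLie R M) : (inl R G M x).left = x :=
  rfl

@[simp]
theorem inr_left (g : G) : (inr R G M g).left = 0 :=
  rfl

@[simp]
theorem inr_right (g : G) : (inr R G M g).right = g :=
  rfl

theorem inl_add_inr (u : HalfLie R G M) : inl R G M u.left + inr R G M u.right = u :=
  SemiDirectSum.ext (add_zero _) (zero_add _)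

theorem lie_left (u v : HalfLie R G M) :
    ⁅u, v⁆.left = ⁅u.left, v.left⁆ + FreeLie.act R M G u.right v.left -
      FreeLie.act R M G v.right u.left :=
  rfl

theorem lie_inr_inl (g : G) (x : FreeLie R M) :
    ⁅inr R G M g, inl R G M x⁆ = inl R G M (FreeLie.act R M G g x) :=
  SemiDirectSum.ext (by simp [lie_left]) (lie_zero g)

instance : LieRingModule (FreeLie R M) (HalfLie R G M) :=
  LieRingModule.compLieHom _ (inl R G M)

instance : LieModule R (FreeLie R M) (HalfLie R G M) :=
  LieModule.compLieHom _ (inl R G M)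

variable (R G M) in
/-- The homogeneous component of degree `n` of the semidirect product, `G` having degree zero. -/
def grade (n : ℤ) : Submodule R (HalfLie R G M) where
  carrier := {u | u.left ∈ FreeLie.grade R M n ∧ u.right ∈ concentrated R G 0 n}
  zero_mem' := ⟨zero_mem _, zero_mem _⟩
  add_mem' hu hv := ⟨add_mem hu.1 hv.1, add_mem hu.2 hv.2⟩
  smul_mem' c _ hu := ⟨Submodule.smul_mem _ c hu.1, Submodule.smul_mem _ c hu.2⟩

theorem inl_mem_grade {n : ℤ} {x : FreeLie R M} (hx : x ∈ FreeLie.grade R M n) :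
    inl R G M x ∈ grade R G M n :=
  ⟨hx, zero_mem _⟩

theorem inr_mem_grade (g : G) : inr R G M g ∈ grade R G M 0 :=
  ⟨zero_mem _, mem_concentrated.2 (Or.inl rfl)⟩

theorem act_mem_grade (g : G) {n : ℤ} {x : FreeLie R M} (hx : x ∈ FreeLie.grade R M n) :
    FreeLie.act R M G g x ∈ FreeLie.grade R M n := by
  rw [← add_zero n]
  exact FreeLie.derivation_mem _ (fun _ _ _ _ ↦ FreeLie.lie_mem_grade)
    (fun a ↦ by simpa using FreeLie.ι_mem_grade ⁅g, a⁆) hx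

theorem act_mem_grade_add {g : G} {i j : ℤ} (hg : g ∈ concentrated R G 0 i) {x : FreeLie R M}
    (hx : x ∈ FreeLie.grade R M j) : FreeLie.act R M G g x ∈ FreeLie.grade R M (i + j) := by
  rcases mem_concentrated.1 hg with rfl | rfl
  · rw [zero_add]
    exact act_mem_grade g hx
  · rw [map_zero]
    exact zero_mem _

theorem lie_mem_grade {i j : ℤ} {u v : HalfLie R G M} (hu : u ∈ grade R G M i)
    (hv : v ∈ grade R G M j) : ⁅u, v⁆ ∈ grade R G M (i + j) := by
  refine ⟨?_, ?_⟩
  · rw [lie_left]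
    refine sub_mem (add_mem (FreeLie.lie_mem_grade hu.1 hv.1) (act_mem_grade_add hu.2 hv.1)) ?_
    rw [add_comm]
    exact act_mem_grade_add hv.2 hu.1
  · change ⁅u.right, v.right⁆ ∈ _
    rcases mem_concentrated.1 hu.2 with rfl | hu0
    · rcases mem_concentrated.1 hv.2 with rfl | hv0
      · exact mem_concentrated.2 (Or.inl rfl)
      · rw [hv0, lie_zero]
        exact zero_mem _
    · rw [hu0, zero_lie]
      exact zero_mem _

end HalfLie

end HalfLie

/-- The underlying module `Free(M) ⊕ G ⊕ Free(N)` of the maximal graded extension. -/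
abbrev GradedSum (R M G N : Type*) [CommRing R] [AddCommGroup M] [Module R M]
    [AddCommGroup N] [Module R N] : Type _ :=
  FreeLie R M × G × FreeLie R N

namespace GradedSum

variable (R M G N : Type*) [CommRing R] [AddCommGroup M] [Module R M] [AddCommGroup N] [Module R N]

section module

variable [AddCommGroup G] [Module R G]

/-- The symmetry exchanging the negative and the positive part. -/
def swap : GradedSum R M G N ≃ₗ[R] GradedSum R N G M where
  toFun v := (v.2.2, v.2.1, v.1)
  invFun v := (v.2.2, v.2.1, v.1)
  map_add' _ _ := rfl
  map_smul' _ _ := rfl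

/-- The projection to the positive part. -/
def toPos : GradedSum R M G N →ₗ[R] FreeLie R N :=
  LinearMap.snd R G (FreeLie R N) ∘ₗ LinearMap.snd R (FreeLie R M) (G × FreeLie R N)

/-- The homogeneous component of degree `n` of `Free(M) ⊕ G ⊕ Free(N)`, the generators in `M` and
`N` having degrees `-1` and `1`. -/
def comp (n : ℤ) : Submodule R (GradedSum R M G N) :=
  (FreeLie.grade R M (-n)).prod ((concentrated R G 0 n).prod (FreeLie.grade R N n))

theorem isInternal_comp : DirectSum.IsInternal (comp R M G N) :=
  isInternal_prod (isInternal_comp_equiv FreeLie.isInternal_grade (Equiv.neg ℤ))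
    (isInternal_prod (isInternal_concentrated 0) FreeLie.isInternal_grade)

variable {R M G N}

theorem mem_comp_of_neg {n : ℤ} (hn : n < 0) {v : GradedSum R M G N} :
    v ∈ comp R M G N n ↔ v.1 ∈ FreeLie.grade R M (-n) ∧ v.2 = 0 := by
  simp [comp, concentrated, hn.ne, FreeLie.grade_of_nonpos hn.le, Prod.ext_iff]

theorem mem_comp_of_pos {n : ℤ} (hn : 0 < n) {v : GradedSum R M G N} :
    v ∈ comp R M G N n ↔ v.1 = 0 ∧ v.2.1 = 0 ∧ v.2.2 ∈ FreeLie.grade R N n := by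
  simp [comp, concentrated, hn.ne', FreeLie.grade_of_nonpos (neg_nonpos.2 hn.le)]

theorem mem_comp_zero {v : GradedSum R M G N} :
    v ∈ comp R M G N 0 ↔ v.1 = 0 ∧ v.2.2 = 0 := by
  simp [comp, concentrated, FreeLie.grade_of_nonpos]

theorem swap_mem_comp {n : ℤ} {v : GradedSum R M G N} (hv : v ∈ comp R M G N n) :
    swap R M G N v ∈ comp R N G M (-n) :=
  ⟨(neg_neg n).symm ▸ hv.2.2, (concentrated_neg (R := R) (V := G) n).symm ▸ hv.2.1, hv.1⟩

theorem toPos_mem_grade {n : ℤ} {v : GradedSum R M G N} (hv : v ∈ comp R M G N n) :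
    toPos R M G N v ∈ FreeLie.grade R N n :=
  hv.2.2

end module

variable [LieRing G] [LieAlgebra R G]

section nonpos

variable [LieRingModule G M] [LieModule R G M]

/-- The inclusion of the nonpositive half. -/
def nonpos : HalfLie R G M →ₗ[R] GradedSum R M G N where
  toFun u := (u.left, u.right, 0)
  map_add' _ _ := Prod.ext rfl (Prod.ext rfl (add_zero _).symm)
  map_smul' c _ := Prod.ext rfl (Prod.ext rfl (smul_zero c).symm)

/-- The projection to the nonpositive half. -/
def toNonpos : GradedSum R M G N →ₗ[R] HalfLie R G M where
  toFun v := ⟨v.1, v.2.1⟩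
  map_add' _ _ := rfl
  map_smul' _ _ := rfl

variable {R M G N}

@[simp]
theorem toNonpos_nonpos (u : HalfLie R G M) : toNonpos R M G N (nonpos R M G N u) = u :=
  rfl

@[simp]
theorem toPos_nonpos (u : HalfLie R G M) : toPos R M G N (nonpos R M G N u) = 0 :=
  rfl

theorem toNonpos_mem_grade {n : ℤ} {v : GradedSum R M G N} (hv : v ∈ comp R M G N n) :
    toNonpos R M G N v ∈ HalfLie.grade R G M (-n) :=
  ⟨hv.1, (concentrated_neg (R := R) (V := G) n).symm ▸ hv.2.1⟩

theorem nonpos_mem_comp {n : ℤ} {u : HalfLie R G M} (hu : u ∈ HalfLie.grade R G M n) :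
    nonpos R M G N u ∈ comp R M G N (-n) :=
  ⟨(neg_neg n).symm ▸ hu.1, (concentrated_neg (R := R) (V := G) n).symm ▸ hu.2, zero_mem _⟩

end nonpos

section nonneg

variable [LieRingModule G N] [LieModule R G N]

/-- The inclusion of the nonnegative half. -/
def nonneg : HalfLie R G N →ₗ[R] GradedSum R M G N :=
  (swap R N G M).toLinearMap ∘ₗ nonpos R N G M

variable {R M G N}

theorem swap_nonneg (u : HalfLie R G N) : swap R M G N (nonneg R M G N u) = nonpos R N G M u :=
  rfl

theorem swap_nonpos (u : HalfLie R G N) : swap R N G M (nonpos R N G M u) = nonneg R M G N u :=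
  rfl

theorem nonneg_mem_comp {n : ℤ} {u : HalfLie R G N} (hu : u ∈ HalfLie.grade R G N n) :
    nonneg R M G N u ∈ comp R M G N n :=
  neg_neg n ▸ swap_mem_comp (nonpos_mem_comp hu)

end nonneg

variable {R M G N}
variable [LieRingModule G M] [LieModule R G M] [LieRingModule G N] [LieModule R G N]

theorem nonneg_inr (g : G) :
    nonneg R M G N (HalfLie.inr R G N g) = nonpos R M G N (HalfLie.inr R G M g) :=
  rfl

theorem nonpos_add_nonneg (v : GradedSum R M G N) :
    nonpos R M G N (toNonpos R M G N v) + nonneg R M G N (HalfLie.inl R G N (toPos R M G N v)) =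
      v :=
  Prod.ext (add_zero _) (Prod.ext (add_zero _) (zero_add _))

theorem linearMap_ext {X : Type*} [AddCommGroup X] [Module R X]
    {f g : GradedSum R M G N →ₗ[R] X} (hnonpos : ∀ u, f (nonpos R M G N u) = g (nonpos R M G N u))
    (hpos : ∀ z, f (nonneg R M G N (HalfLie.inl R G N z)) =
      g (nonneg R M G N (HalfLie.inl R G N z))) : f = g :=
  LinearMap.ext fun v ↦ by
    rw [← nonpos_add_nonneg v, map_add, map_add, hnonpos, hpos]

end GradedSum

namespace LocalLieData

variable {K Gneg Gzero Gpos : Type} [Field K] [LieRing Gzero] [LieAlgebra K Gzero]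
  [AddCommGroup Gneg] [Module K Gneg] [LieRingModule Gzero Gneg] [LieModule K Gzero Gneg]
  [AddCommGroup Gpos] [Module K Gpos] [LieRingModule Gzero Gpos] [LieModule K Gzero Gpos]

local notation "i₋" => GradedSum.nonpos K Gneg Gzero Gpos
local notation "i₊" => GradedSum.nonneg K Gneg Gzero Gpos
local notation "σ" => GradedSum.swap K Gpos Gzero Gneg

open FreeLie HalfLie GradedSum

variable (K Gneg Gzero Gpos) in
/-- The action of the degree-zero part on `Free(Gneg) ⊕ Gzero ⊕ Free(Gpos)`. -/
def zeroRep : Gzero →ₗ⁅K⁆ Module.End K (GradedSum K Gneg Gzero Gpos) where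
  toFun g := (act K Gneg Gzero g).toLinearMap.prodMap
    ((ad K Gzero g).prodMap (act K Gpos Gzero g).toLinearMap)
  map_add' g h := LinearMap.ext fun v ↦ by simp
  map_smul' c g := LinearMap.ext fun v ↦ by simp
  map_lie' {g h} := LinearMap.ext fun v ↦ by
    simp [LieRing.of_associative_ring_bracket]

theorem zeroRep_nonpos (g : Gzero) (u : HalfLie K Gzero Gneg) :
    zeroRep K Gneg Gzero Gpos g (i₋ u) = i₋ ⁅inr K Gzero Gneg g, u⁆ := by
  refine Prod.ext ?_ (Prod.ext rfl (map_zero (act K Gpos Gzero g)))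
  simp [lie_left, zeroRep, nonpos]

theorem zeroRep_nonneg (g : Gzero) (u : HalfLie K Gzero Gpos) :
    zeroRep K Gneg Gzero Gpos g (i₊ u) = i₊ ⁅inr K Gzero Gpos g, u⁆ :=
  congrArg σ (zeroRep_nonpos g u)

variable (D : LocalLieData K Gneg Gzero Gpos)

/-- The local Lie algebra with the roles of the degrees `-1` and `1` exchanged. -/
protected def swap : LocalLieData K Gpos Gzero Gneg where
  br := -D.br.flip
  equivariant x b a := by
    simp only [LinearMap.neg_apply, LinearMap.flip_apply, lie_neg, D.equivariant, neg_add_rev]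

theorem swap_br (a : Gneg) (b : Gpos) : D.swap.br b a = -D.br a b :=
  rfl

theorem swap_swap : D.swap.swap = D := by
  rcases D with ⟨br, _⟩
  rw [mk.injEq]
  exact LinearMap.ext₂ fun a b ↦ neg_neg (br a b)

/-- The adjoint action of a generator of degree `-1` on the positive part: on generators it is the
given bracket. -/
def negDer : Gneg →ₗ[K] LieDerivation K (FreeLie K Gpos) (HalfLie K Gzero Gpos) where
  toFun a := derivation ((inr K Gzero Gpos).toLinearMap ∘ₗ D.br a)
  map_add' a a' := derivation_ext fun b ↦ by simp
  map_smul' c a := derivation_ext fun b ↦ by simp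

theorem negDer_ι (a : Gneg) (b : Gpos) : D.negDer a (ι K Gpos b) = inr K Gzero Gpos (D.br a b) :=
  derivation_ι _ b

theorem negDer_lie (a : Gneg) (x y : FreeLie K Gpos) :
    D.negDer a ⁅x, y⁆ = ⁅inl K Gzero Gpos x, D.negDer a y⁆ - ⁅inl K Gzero Gpos y, D.negDer a x⁆ :=
  LieDerivation.apply_lie_eq_sub _ x y

theorem lie_inr_negDer (g : Gzero) (a : Gneg) (z : FreeLie K Gpos) :
    ⁅inr K Gzero Gpos g, D.negDer a z⁆ = D.negDer ⁅g, a⁆ z + D.negDer a (act K Gpos Gzero g z) := by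
  induction z using FreeLie.induction with
  | ι b => simp only [act_ι, negDer_ι, ← LieHom.map_lie, ← map_add, D.equivariant]
  | zero => simp only [map_zero, lie_zero, add_zero]
  | add x y hx hy => simp only [map_add, lie_add, hx, hy]; abel
  | smul c x hx => simp only [map_smul, lie_smul, hx, smul_add]
  | lie x y hx hy =>
    simp only [negDer_lie, LieDerivation.apply_lie_eq_add, lie_sub, leibniz_lie (inr _ _ _ g),
      lie_inr_inl, hx, hy, map_add, lie_add]
    abel

/-- The adjoint action of a generator of degree `-1`. -/
def negGen : Gneg →ₗ[K] Module.End K (GradedSum K Gneg Gzero Gpos) where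
  toFun a := i₋ ∘ₗ ad K (HalfLie K Gzero Gneg) (inl K Gzero Gneg (ι K Gneg a)) ∘ₗ
      toNonpos K Gneg Gzero Gpos +
    i₊ ∘ₗ (D.negDer a).toLinearMap ∘ₗ toPos K Gneg Gzero Gpos
  map_add' a a' := LinearMap.ext fun v ↦ by
    simp only [map_add, LieDerivation.coe_add_linearMap, LinearMap.add_apply, LinearMap.comp_apply,
      ad_apply, LieDerivation.coeFn_coe]
    abel
  map_smul' c a := LinearMap.ext fun v ↦ by simp

theorem negGen_nonpos (a : Gneg) (u : HalfLie K Gzero Gneg) :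
    D.negGen a (i₋ u) = i₋ ⁅inl K Gzero Gneg (ι K Gneg a), u⁆ := by
  change _ + i₊ (D.negDer a 0) = _
  rw [map_zero, map_zero, add_zero]
  rfl

theorem negGen_pos (a : Gneg) (z : FreeLie K Gpos) :
    D.negGen a (i₊ (inl K Gzero Gpos z)) = i₊ (D.negDer a z) := by
  change i₋ ⁅inl K Gzero Gneg (ι K Gneg a), 0⁆ + _ = _
  rw [lie_zero, map_zero, zero_add]
  rfl

theorem lie_zeroRep_negGen (g : Gzero) (a : Gneg) :
    ⁅zeroRep K Gneg Gzero Gpos g, D.negGen a⁆ = D.negGen ⁅g, a⁆ := by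
  refine linearMap_ext (fun u ↦ ?_) fun z ↦ ?_
  · rw [lie_end_apply, negGen_nonpos, zeroRep_nonpos, zeroRep_nonpos, negGen_nonpos,
      negGen_nonpos, ← map_sub, ← lie_lie, lie_inr_inl, act_ι]
  · rw [lie_end_apply, negGen_pos, zeroRep_nonneg, zeroRep_nonneg, lie_inr_inl, negGen_pos,
      negGen_pos, ← map_sub, lie_inr_negDer, add_sub_cancel_right]

/-- The adjoint action of the negative part. -/
def negRep : FreeLie K Gneg →ₗ⁅K⁆ Module.End K (GradedSum K Gneg Gzero Gpos) :=
  lift D.negGen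

theorem negRep_ι (a : Gneg) : D.negRep (ι K Gneg a) = D.negGen a :=
  lift_ι D.negGen a

theorem lie_zeroRep_negRep (g : Gzero) (y : FreeLie K Gneg) :
    ⁅zeroRep K Gneg Gzero Gpos g, D.negRep y⁆ = D.negRep (act K Gneg Gzero g y) := by
  induction y using FreeLie.induction with
  | ι a => rw [act_ι, negRep_ι, negRep_ι, lie_zeroRep_negGen]
  | zero => simp only [map_zero, lie_zero]
  | add x y hx hy => simp only [map_add, lie_add, hx, hy]
  | smul c x hx =>
    rw [map_smul, map_smul, map_smul, ← hx]
    exact LieAlgebra.lie_smul c (zeroRep K Gneg Gzero Gpos g) (D.negRep x)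
  | lie x y hx hy =>
    simp only [LieHom.map_lie, LieDerivation.apply_lie_eq_add, leibniz_lie (zeroRep _ _ _ _ g), hx,
      hy, map_add]
    abel

/-- The adjoint action of the nonpositive half. -/
def nonposRep : HalfLie K Gzero Gneg →ₗ⁅K⁆ Module.End K (GradedSum K Gneg Gzero Gpos) where
  toFun u := D.negRep u.left + zeroRep K Gneg Gzero Gpos u.right
  map_add' u w := by
    change D.negRep (u.left + w.left) + zeroRep K Gneg Gzero Gpos (u.right + w.right) = _
    rw [map_add, map_add, add_add_add_comm]
  map_smul' c u := by
    change D.negRep (c • u.left) + zeroRep K Gneg Gzero Gpos (c • u.right) = _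
    rw [map_smul, map_smul, ← smul_add, RingHom.id_apply]
  map_lie' {u w} := by
    change D.negRep (⁅u.left, w.left⁆ + act K Gneg Gzero u.right w.left -
      act K Gneg Gzero w.right u.left) + zeroRep K Gneg Gzero Gpos ⁅u.right, w.right⁆ = _
    rw [map_sub, map_add, LieHom.map_lie, LieHom.map_lie, ← lie_zeroRep_negRep,
      ← lie_zeroRep_negRep, lie_add, add_lie, add_lie,
      ← lie_skew (D.negRep u.left) (zeroRep _ _ _ _ w.right)]
    abel

theorem nonposRep_inl (y : FreeLie K Gneg) : D.nonposRep (inl K Gzero Gneg y) = D.negRep y :=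
  (congrArg (D.negRep y + ·) (map_zero (zeroRep K Gneg Gzero Gpos))).trans (add_zero _)

theorem nonposRep_inr (g : Gzero) :
    D.nonposRep (inr K Gzero Gneg g) = zeroRep K Gneg Gzero Gpos g :=
  (congrArg (· + zeroRep K Gneg Gzero Gpos g) (map_zero D.negRep)).trans (zero_add _)

theorem nonposRep_ι (a : Gneg) : D.nonposRep (inl K Gzero Gneg (ι K Gneg a)) = D.negGen a := by
  rw [nonposRep_inl, negRep_ι]

theorem nonposRep_nonpos (u w : HalfLie K Gzero Gneg) : D.nonposRep u (i₋ w) = i₋ ⁅u, w⁆ := by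
  have hneg (y : FreeLie K Gneg) (w : HalfLie K Gzero Gneg) :
      D.negRep y (i₋ w) = i₋ ⁅inl K Gzero Gneg y, w⁆ := by
    induction y using FreeLie.induction generalizing w with
    | ι a => rw [negRep_ι, negGen_nonpos]
    | zero => simp only [map_zero, LinearMap.zero_apply, zero_lie]
    | add x y hx hy => simp only [map_add, LinearMap.add_apply, add_lie, hx, hy]
    | smul c x hx => simp only [map_smul, LinearMap.smul_apply, smul_lie, hx]
    | lie x y hx hy => simp only [LieHom.map_lie, lie_end_apply, lie_lie, hx, hy, map_sub]
  rw [← inl_add_inr u, map_add, LinearMap.add_apply, nonposRep_inl, nonposRep_inr, hneg,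
    zeroRep_nonpos, ← map_add, ← add_lie]

/-- The adjoint action of the nonnegative half, obtained from that of the nonpositive half by
symmetry. -/
def nonnegRep : HalfLie K Gzero Gpos →ₗ⁅K⁆ Module.End K (GradedSum K Gneg Gzero Gpos) :=
  (σ).lieConj.toLieHom.comp D.swap.nonposRep

theorem nonnegRep_apply_swap (u : HalfLie K Gzero Gpos) (v : GradedSum K Gpos Gzero Gneg) :
    D.nonnegRep u (σ v) = σ (D.swap.nonposRep u v) :=
  rfl

theorem nonposRep_apply_swap (u : HalfLie K Gzero Gneg) (v : GradedSum K Gpos Gzero Gneg) :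
    D.nonposRep u (σ v) = σ (D.swap.nonnegRep u v) := by
  change _ = D.swap.swap.nonposRep u (σ v)
  rw [swap_swap]

theorem nonnegRep_nonneg (u w : HalfLie K Gzero Gpos) : D.nonnegRep u (i₊ w) = i₊ ⁅u, w⁆ :=
  congrArg σ (D.swap.nonposRep_nonpos u w)

theorem nonnegRep_ι_neg (b : Gpos) (y : FreeLie K Gneg) :
    D.nonnegRep (inl K Gzero Gpos (ι K Gpos b)) (i₋ (inl K Gzero Gneg y)) =
      i₋ (D.swap.negDer b y) := by
  rw [← GradedSum.swap_nonneg, nonnegRep_apply_swap, nonposRep_ι, negGen_pos]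
  rfl

theorem nonnegRep_inr (g : Gzero) :
    D.nonnegRep (inr K Gzero Gpos g) = zeroRep K Gneg Gzero Gpos g := by
  refine (congrArg (σ).lieConj (D.swap.nonposRep_inr g)).trans ?_
  rfl

theorem lie_negGen_nonnegRep_pos (a : Gneg) (b : Gpos) (z : FreeLie K Gpos) :
    ⁅D.negGen a, D.nonnegRep (inl K Gzero Gpos (ι K Gpos b))⁆ (i₊ (inl K Gzero Gpos z)) =
      zeroRep K Gneg Gzero Gpos (D.br a b) (i₊ (inl K Gzero Gpos z)) := by
  rw [lie_end_apply, nonnegRep_nonneg, ← LieHom.map_lie, negGen_pos, negGen_pos, nonnegRep_nonneg,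
    negDer_lie, negDer_ι, zeroRep_nonneg, ← map_sub, sub_sub_cancel_left, lie_skew]

theorem lie_negGen_nonnegRep_neg (a : Gneg) (b : Gpos) (y : FreeLie K Gneg) :
    ⁅D.negGen a, D.nonnegRep (inl K Gzero Gpos (ι K Gpos b))⁆ (i₋ (inl K Gzero Gneg y)) =
      zeroRep K Gneg Gzero Gpos (D.br a b) (i₋ (inl K Gzero Gneg y)) := by
  have h := congrArg σ (D.swap.lie_negGen_nonnegRep_pos b a y)
  rw [← lie_skew, LinearMap.neg_apply, swap_br, map_neg (zeroRep K Gpos Gzero Gneg),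
    LinearMap.neg_apply, map_neg, map_neg, neg_inj, lie_end_apply, map_sub, ← nonposRep_ι,
    ← nonposRep_apply_swap, ← nonnegRep_apply_swap, ← nonnegRep_apply_swap, ← nonposRep_apply_swap,
    nonposRep_ι] at h
  exact h

theorem lie_negGen_nonnegRep_zero (a : Gneg) (b : Gpos) (g : Gzero) :
    ⁅D.negGen a, D.nonnegRep (inl K Gzero Gpos (ι K Gpos b))⁆ (i₋ (inr K Gzero Gneg g)) =
      zeroRep K Gneg Gzero Gpos (D.br a b) (i₋ (inr K Gzero Gneg g)) := by
  have hleft : D.negGen a (D.nonnegRep (inl K Gzero Gpos (ι K Gpos b)) (i₋ (inr K Gzero Gneg g))) =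
      -i₋ (inr K Gzero Gneg (D.br a ⁅g, b⁆)) := by
    rw [← nonneg_inr, nonnegRep_nonneg, ← lie_skew, lie_inr_inl, act_ι, map_neg, map_neg,
      negGen_pos, negDer_ι, nonneg_inr]
  have hright : D.nonnegRep (inl K Gzero Gpos (ι K Gpos b)) (D.negGen a (i₋ (inr K Gzero Gneg g))) =
      i₋ (inr K Gzero Gneg (D.br ⁅g, a⁆ b)) := by
    rw [negGen_nonpos, ← lie_skew, lie_inr_inl, act_ι, map_neg, map_neg, nonnegRep_ι_neg,
      negDer_ι, swap_br, map_neg, map_neg, neg_neg]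
  rw [lie_end_apply, hleft, hright, zeroRep_nonpos, ← LieHom.map_lie, ← lie_skew, D.equivariant]
  simp only [map_neg, map_add]
  abel

theorem lie_negGen_nonnegRep (a : Gneg) (b : Gpos) :
    ⁅D.negGen a, D.nonnegRep (inl K Gzero Gpos (ι K Gpos b))⁆ =
      zeroRep K Gneg Gzero Gpos (D.br a b) := by
  refine linearMap_ext (fun u ↦ ?_) (D.lie_negGen_nonnegRep_pos a b)
  rw [← inl_add_inr u, map_add, map_add, map_add, lie_negGen_nonnegRep_neg,
    lie_negGen_nonnegRep_zero]

theorem nonnegRep_negDer (a : Gneg) (z : FreeLie K Gpos) :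
    D.nonnegRep (D.negDer a z) = ⁅D.negGen a, D.nonnegRep (inl K Gzero Gpos z)⁆ := by
  induction z using FreeLie.induction with
  | ι b => rw [negDer_ι, nonnegRep_inr, lie_negGen_nonnegRep]
  | zero => simp only [map_zero, lie_zero]
  | add x y hx hy => simp only [map_add, lie_add, hx, hy]
  | smul c x hx =>
    rw [map_smul, map_smul, map_smul, map_smul, hx]
    exact (LieAlgebra.lie_smul c (D.negGen a) (D.nonnegRep (inl K Gzero Gpos x))).symm
  | lie x y hx hy =>
    rw [negDer_lie, map_sub, LieHom.map_lie, LieHom.map_lie, LieHom.map_lie, LieHom.map_lie,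
      leibniz_lie (D.negGen a), hx, hy, ← lie_skew ⁅D.negGen a, D.nonnegRep _⁆ (D.nonnegRep _),
      sub_eq_neg_add]

/-- The adjoint representation of the maximal graded extension. -/
def adj : GradedSum K Gneg Gzero Gpos →ₗ[K] Module.End K (GradedSum K Gneg Gzero Gpos) :=
  D.nonposRep.toLinearMap ∘ₗ toNonpos K Gneg Gzero Gpos +
    D.nonnegRep.toLinearMap ∘ₗ (inl K Gzero Gpos).toLinearMap ∘ₗ toPos K Gneg Gzero Gpos

theorem adj_nonpos (u : HalfLie K Gzero Gneg) : D.adj (i₋ u) = D.nonposRep u := by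
  simp [adj]

theorem adj_nonneg (u : HalfLie K Gzero Gpos) : D.adj (i₊ u) = D.nonnegRep u := by
  change D.nonposRep (inr K Gzero Gneg u.right) + D.nonnegRep (inl K Gzero Gpos u.left) = _
  rw [nonposRep_inr, ← nonnegRep_inr, ← map_add, add_comm, inl_add_inr]

theorem adj_swap_apply_swap (v w : GradedSum K Gpos Gzero Gneg) :
    D.adj (σ v) (σ w) = σ (D.swap.adj v w) := by
  rw [← nonpos_add_nonneg v]
  simp only [map_add, LinearMap.add_apply, GradedSum.swap_nonpos, GradedSum.swap_nonneg,
    adj_nonpos, adj_nonneg, nonnegRep_apply_swap, nonposRep_apply_swap]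

theorem adj_swap (v : GradedSum K Gpos Gzero Gneg) :
    D.adj (σ v) = (σ).lieConj (D.swap.adj v) :=
  LinearMap.ext fun w ↦ D.adj_swap_apply_swap v ((σ).symm w)

@[elab_as_elim]
theorem adj_induction {P : GradedSum K Gneg Gzero Gpos → Prop}
    (neg : ∀ a, P (i₋ (inl K Gzero Gneg (ι K Gneg a)))) (zero : ∀ g, P (i₋ (inr K Gzero Gneg g)))
    (pos : ∀ b, P (i₊ (inl K Gzero Gpos (ι K Gpos b)))) (add : ∀ v w, P v → P w → P (v + w))
    (smul : ∀ (c : K) v, P v → P (c • v)) (adj : ∀ v w, P v → P w → P (D.adj v w))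
    (v : GradedSum K Gneg Gzero Gpos) : P v := by
  have hzero : P 0 := by simpa only [map_zero] using zero 0
  have hneg (y : FreeLie K Gneg) : P (i₋ (inl K Gzero Gneg y)) := by
    induction y using FreeLie.induction with
    | ι a => exact neg a
    | zero => simpa only [map_zero] using hzero
    | add x y hx hy => simpa only [map_add] using add _ _ hx hy
    | smul c x hx => simpa only [map_smul] using smul c _ hx
    | lie x y hx hy =>
      simpa only [adj_nonpos, nonposRep_nonpos, LieHom.map_lie] using adj _ _ hx hy
  have hpos (z : FreeLie K Gpos) : P (i₊ (inl K Gzero Gpos z)) := by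
    induction z using FreeLie.induction with
    | ι b => exact pos b
    | zero => simpa only [map_zero] using hzero
    | add x y hx hy => simpa only [map_add] using add _ _ hx hy
    | smul c x hx => simpa only [map_smul] using smul c _ hx
    | lie x y hx hy =>
      simpa only [adj_nonneg, nonnegRep_nonneg, LieHom.map_lie] using adj _ _ hx hy
  rw [← nonpos_add_nonneg v, ← inl_add_inr (toNonpos K Gneg Gzero Gpos v), map_add]
  exact add _ _ (add _ _ (hneg _) (zero _)) (hpos _)

theorem adj_negGen (a : Gneg) (v : GradedSum K Gneg Gzero Gpos) :
    D.adj (D.negGen a v) = ⁅D.negGen a, D.adj v⁆ := by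
  rw [← nonpos_add_nonneg v]
  simp only [map_add, lie_add, negGen_nonpos, negGen_pos, adj_nonpos, adj_nonneg, LieHom.map_lie,
    nonposRep_ι, nonnegRep_negDer]

theorem adj_zeroRep (g : Gzero) (v : GradedSum K Gneg Gzero Gpos) :
    D.adj (zeroRep K Gneg Gzero Gpos g v) = ⁅zeroRep K Gneg Gzero Gpos g, D.adj v⁆ := by
  rw [← nonpos_add_nonneg v]
  simp only [map_add, lie_add, zeroRep_nonpos, zeroRep_nonneg, adj_nonpos, adj_nonneg,
    LieHom.map_lie, nonposRep_inr, nonnegRep_inr]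

theorem adj_adj (v w : GradedSum K Gneg Gzero Gpos) :
    D.adj (D.adj v w) = ⁅D.adj v, D.adj w⁆ := by
  induction v using D.adj_induction generalizing w with
  | neg a => rw [adj_nonpos, nonposRep_ι, adj_negGen]
  | zero g => rw [adj_nonpos, nonposRep_inr, adj_zeroRep]
  | pos b =>
    have h := congrArg (σ).lieConj (D.swap.adj_negGen b ((σ).symm w))
    rw [← nonposRep_ι, ← adj_nonpos, LieEquiv.map_lie, ← adj_swap, ← adj_swap, ← adj_swap,
      ← adj_swap_apply_swap, LinearEquiv.apply_symm_apply] at h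
    exact h
  | add v v' hv hv' => simp only [map_add, LinearMap.add_apply, add_lie, hv, hv']
  | smul c v hv =>
    rw [map_smul, LinearMap.smul_apply, map_smul, hv]
    exact (smul_lie c (D.adj v) (D.adj w)).symm
  | adj x y hx hy => rw [hx, lie_end_apply, map_sub, hx, hy, hy, hx, lie_lie]

theorem negGen_apply (a : Gneg) (v : GradedSum K Gneg Gzero Gpos) :
    D.negGen a v = -D.adj v (i₋ (inl K Gzero Gneg (ι K Gneg a))) := by
  have hpos (z : FreeLie K Gpos) : i₊ (D.negDer a z) =
      -D.nonnegRep (inl K Gzero Gpos z) (i₋ (inl K Gzero Gneg (ι K Gneg a))) := by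
    induction z using FreeLie.induction with
    | ι b =>
      rw [nonnegRep_ι_neg, negDer_ι, negDer_ι, swap_br, map_neg, map_neg, neg_neg, nonneg_inr]
    | zero => simp only [map_zero, LinearMap.zero_apply, neg_zero]
    | add x y hx hy => simp only [map_add, LinearMap.add_apply, hx, hy, neg_add]
    | smul c x hx => simp only [map_smul, LinearMap.smul_apply, hx, smul_neg]
    | lie x y hx hy =>
      rw [← neg_eq_iff_eq_neg] at hx hy
      rw [LieHom.map_lie, LieHom.map_lie, lie_end_apply, ← hx, ← hy, map_neg, map_neg,
        nonnegRep_nonneg, nonnegRep_nonneg, negDer_lie, map_sub]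
      abel
  rw [← nonpos_add_nonneg v]
  simp only [map_add, LinearMap.add_apply, negGen_nonpos, negGen_pos, adj_nonpos, adj_nonneg,
    nonposRep_nonpos, hpos, neg_add, ← map_neg, lie_skew]

theorem zeroRep_apply (g : Gzero) (v : GradedSum K Gneg Gzero Gpos) :
    zeroRep K Gneg Gzero Gpos g v = -D.adj v (i₋ (inr K Gzero Gneg g)) := by
  rw [← nonpos_add_nonneg v, map_add, map_add, LinearMap.add_apply, zeroRep_nonpos,
    zeroRep_nonneg, adj_nonpos, adj_nonneg, nonposRep_nonpos, ← nonneg_inr, nonnegRep_nonneg,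
    neg_add, ← map_neg, ← map_neg, lie_skew, lie_skew]

theorem adj_skew (v w : GradedSum K Gneg Gzero Gpos) : D.adj v w = -D.adj w v := by
  induction v using D.adj_induction generalizing w with
  | neg a => rw [adj_nonpos, nonposRep_ι, negGen_apply]
  | zero g => rw [adj_nonpos, nonposRep_inr, ← zeroRep_apply]
  | pos b =>
    have h := congrArg σ (D.swap.negGen_apply b ((σ).symm w))
    rw [← nonposRep_ι, ← adj_nonpos, map_neg, ← adj_swap_apply_swap, ← adj_swap_apply_swap,
      LinearEquiv.apply_symm_apply] at h
    exact h
  | add v v' hv hv' => simp only [map_add, LinearMap.add_apply, hv, hv', neg_add]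
  | smul c v hv => simp only [map_smul, LinearMap.smul_apply, hv, smul_neg]
  | adj x y _ hy =>
    rw [adj_adj, lie_end_apply, hy w, hy (D.adj x w), adj_adj, lie_end_apply, map_neg]
    abel

theorem adj_self (v : GradedSum K Gneg Gzero Gpos) : D.adj v v = 0 := by
  rw [← nonpos_add_nonneg v, map_add, map_add, LinearMap.add_apply, LinearMap.add_apply,
    adj_nonpos, adj_nonneg, nonposRep_nonpos, nonnegRep_nonneg, lie_self, lie_self, map_zero,
    map_zero, zero_add, add_zero, ← adj_nonneg, ← adj_nonpos, adj_skew, neg_add_cancel]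

theorem adj_leibniz (v v' w : GradedSum K Gneg Gzero Gpos) :
    D.adj v (D.adj v' w) = D.adj (D.adj v v') w + D.adj v' (D.adj v w) := by
  rw [adj_adj, lie_end_apply, sub_add_cancel]

/-- The maximal graded extension of a local Lie algebra: `Free(Gneg) ⊕ Gzero ⊕ Free(Gpos)` with
the bracket `adj`. -/
def LMax (_ : LocalLieData K Gneg Gzero Gpos) : Type :=
  GradedSum K Gneg Gzero Gpos

instance : AddCommGroup D.LMax :=
  inferInstanceAs (AddCommGroup (GradedSum K Gneg Gzero Gpos))

instance : Module K D.LMax :=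
  inferInstanceAs (Module K (GradedSum K Gneg Gzero Gpos))

instance : LieRing D.LMax where
  bracket v w := D.adj v w
  add_lie v v' w := LinearMap.congr_fun (map_add D.adj v v') w
  lie_add v w w' := map_add (D.adj v) w w'
  lie_self v := D.adj_self v
  leibniz_lie v v' w := D.adj_leibniz v v' w

instance : LieAlgebra K D.LMax where
  lie_smul c v w := map_smul (D.adj v) c w

/-- The inclusion of the nonpositive half as a Lie subalgebra. -/
def nonposHom : HalfLie K Gzero Gneg →ₗ⁅K⁆ D.LMax where
  __ := i₋
  map_lie' {u w} := by
    change _ = D.adj (i₋ u) (i₋ w)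
    rw [adj_nonpos, nonposRep_nonpos]
    rfl

/-- The inclusion of the nonnegative half as a Lie subalgebra. -/
def nonnegHom : HalfLie K Gzero Gpos →ₗ⁅K⁆ D.LMax where
  __ := i₊
  map_lie' {u w} := by
    change _ = D.adj (i₊ u) (i₊ w)
    rw [adj_nonneg, nonnegRep_nonneg]
    rfl

theorem zeroRep_mem_comp (g : Gzero) {n : ℤ} {v : GradedSum K Gneg Gzero Gpos}
    (hv : v ∈ comp K Gneg Gzero Gpos n) :
    zeroRep K Gneg Gzero Gpos g v ∈ comp K Gneg Gzero Gpos n :=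
  ⟨act_mem_grade g hv.1, mem_concentrated.2 ((mem_concentrated.1 hv.2.1).imp_right fun h ↦
    (congrArg (⁅g, ·⁆) h).trans (lie_zero g)), act_mem_grade g hv.2.2⟩

theorem negDer_mem_grade (a : Gneg) {n : ℤ} {z : FreeLie K Gpos} (hz : z ∈ FreeLie.grade K Gpos n) :
    D.negDer a z ∈ HalfLie.grade K Gzero Gpos (n - 1) :=
  derivation_mem _ (fun _ _ _ _ hx hu ↦ HalfLie.lie_mem_grade (inl_mem_grade hx) hu)
    (fun b ↦ by rw [negDer_ι]; exact inr_mem_grade _) hz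

theorem negGen_mem_comp (a : Gneg) {n : ℤ} {v : GradedSum K Gneg Gzero Gpos}
    (hv : v ∈ comp K Gneg Gzero Gpos n) : D.negGen a v ∈ comp K Gneg Gzero Gpos (n - 1) := by
  rw [← nonpos_add_nonneg v, map_add, negGen_nonpos, negGen_pos]
  refine add_mem ?_ (nonneg_mem_comp (D.negDer_mem_grade a (toPos_mem_grade hv)))
  have h := nonpos_mem_comp (N := Gpos)
    (HalfLie.lie_mem_grade (inl_mem_grade (ι_mem_grade a)) (toNonpos_mem_grade hv))
  rwa [neg_add_rev, neg_neg] at h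

theorem negRep_mem_comp {i j : ℤ} {y : FreeLie K Gneg} (hy : y ∈ FreeLie.grade K Gneg i)
    {v : GradedSum K Gneg Gzero Gpos} (hv : v ∈ comp K Gneg Gzero Gpos j) :
    D.negRep y v ∈ comp K Gneg Gzero Gpos (j - i) := by
  induction hy using FreeLie.grade_induction generalizing j v with
  | ι a =>
    rw [negRep_ι]
    exact D.negGen_mem_comp a hv
  | zero i => rw [map_zero]; exact zero_mem _
  | add i x y _ _ hx hy => rw [map_add]; exact add_mem (hx hv) (hy hv)
  | smul i c x _ hx => rw [map_smul]; exact Submodule.smul_mem _ c (hx hv)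
  | lie i a x _ ih =>
    rw [LieHom.map_lie, lie_end_apply, negRep_ι]
    refine sub_mem ?_ ?_
    · rw [← sub_sub, sub_right_comm]
      exact D.negGen_mem_comp a (ih hv)
    · rw [← sub_sub]
      exact ih (D.negGen_mem_comp a hv)

theorem nonposRep_mem_comp {i j : ℤ} {u : HalfLie K Gzero Gneg}
    (hu : u ∈ HalfLie.grade K Gzero Gneg i) {v : GradedSum K Gneg Gzero Gpos}
    (hv : v ∈ comp K Gneg Gzero Gpos j) : D.nonposRep u v ∈ comp K Gneg Gzero Gpos (j - i) := by
  refine add_mem (D.negRep_mem_comp hu.1 hv) ?_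
  rcases mem_concentrated.1 hu.2 with rfl | hu0
  · rw [sub_zero]
    exact zeroRep_mem_comp u.right hv
  · rw [hu0, map_zero]
    exact zero_mem _

theorem nonnegRep_mem_comp {i j : ℤ} {u : HalfLie K Gzero Gpos}
    (hu : u ∈ HalfLie.grade K Gzero Gpos i) {v : GradedSum K Gneg Gzero Gpos}
    (hv : v ∈ comp K Gneg Gzero Gpos j) : D.nonnegRep u v ∈ comp K Gneg Gzero Gpos (i + j) := by
  have h := swap_mem_comp (D.swap.nonposRep_mem_comp hu (swap_mem_comp hv))
  rwa [← nonnegRep_apply_swap, neg_sub, sub_neg_eq_add] at h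

theorem adj_mem_comp {i j : ℤ} {v w : GradedSum K Gneg Gzero Gpos}
    (hv : v ∈ comp K Gneg Gzero Gpos i) (hw : w ∈ comp K Gneg Gzero Gpos j) :
    D.adj v w ∈ comp K Gneg Gzero Gpos (i + j) := by
  refine add_mem ?_ (D.nonnegRep_mem_comp (inl_mem_grade (toPos_mem_grade hv)) hw)
  have h := D.nonposRep_mem_comp (toNonpos_mem_grade hv) hw
  rwa [sub_neg_eq_add, add_comm] at h

/-- The homogeneous component of degree `n` of the maximal graded extension. -/
def gradedPart (n : ℤ) : Submodule K D.LMax :=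
  comp K Gneg Gzero Gpos n

/-- The inclusion of the free Lie algebra on the component of degree `-1`. -/
def negHom : FreeLie K Gneg →ₗ⁅K⁆ D.LMax :=
  D.nonposHom.comp (inl K Gzero Gneg)

/-- The inclusion of the component of degree zero. -/
def zeroHom : Gzero →ₗ⁅K⁆ D.LMax :=
  D.nonposHom.comp (inr K Gzero Gneg)

/-- The inclusion of the free Lie algebra on the component of degree `1`. -/
def posHom : FreeLie K Gpos →ₗ⁅K⁆ D.LMax :=
  D.nonnegHom.comp (inl K Gzero Gpos)

theorem negHom_injective : Function.Injective D.negHom :=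
  fun _ _ h ↦ congrArg Prod.fst h

theorem zeroHom_injective : Function.Injective D.zeroHom :=
  fun _ _ h ↦ congrArg (fun v : GradedSum K Gneg Gzero Gpos ↦ v.2.1) h

theorem posHom_injective : Function.Injective D.posHom :=
  fun _ _ h ↦ congrArg (fun v : GradedSum K Gneg Gzero Gpos ↦ v.2.2) h

theorem gradedPart_of_neg {n : ℤ} (hn : n < 0) :
    D.gradedPart n = (FreeLie.grade K Gneg (-n)).map (D.negHom : FreeLie K Gneg →ₗ[K] D.LMax) := by
  ext v
  refine (mem_comp_of_neg hn).trans ⟨fun hv ↦ ⟨v.1, hv.1, Prod.ext rfl hv.2.symm⟩, ?_⟩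
  rintro ⟨y, hy, rfl⟩
  exact ⟨hy, rfl⟩

theorem gradedPart_zero : D.gradedPart 0 = (D.zeroHom : Gzero →ₗ[K] D.LMax).range := by
  ext v
  refine mem_comp_zero.trans
    ⟨fun hv ↦ ⟨v.2.1, Prod.ext hv.1.symm (Prod.ext rfl hv.2.symm)⟩, ?_⟩
  rintro ⟨g, rfl⟩
  exact ⟨rfl, rfl⟩

theorem gradedPart_of_pos {n : ℤ} (hn : 0 < n) :
    D.gradedPart n = (FreeLie.grade K Gpos n).map (D.posHom : FreeLie K Gpos →ₗ[K] D.LMax) := by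
  ext v
  refine (mem_comp_of_pos hn).trans
    ⟨fun hv ↦ ⟨v.2.2, hv.2.2, Prod.ext hv.1.symm (Prod.ext hv.2.1.symm rfl)⟩, ?_⟩
  rintro ⟨z, hz, rfl⟩
  exact ⟨rfl, rfl, hz⟩

theorem gradedPart_neg_one :
    D.gradedPart (-1) = ((D.negHom : FreeLie K Gneg →ₗ[K] D.LMax) ∘ₗ ι K Gneg).range := by
  rw [D.gradedPart_of_neg neg_one_lt_zero, LinearMap.range_comp, neg_neg, grade_one]

theorem gradedPart_one :
    D.gradedPart 1 = ((D.posHom : FreeLie K Gpos →ₗ[K] D.LMax) ∘ₗ ι K Gpos).range := by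
  rw [D.gradedPart_of_pos zero_lt_one, LinearMap.range_comp, grade_one]

theorem lieSpan_gradedPart_neg_one :
    LieSubalgebra.lieSpan K D.LMax (D.gradedPart (-1)) = D.negHom.range := by
  rw [gradedPart_neg_one, lieSpan_range_comp_ι]

theorem lieSpan_gradedPart_one :
    LieSubalgebra.lieSpan K D.LMax (D.gradedPart 1) = D.posHom.range := by
  rw [gradedPart_one, lieSpan_range_comp_ι]

theorem lie_negHom_posHom_ι (a : Gneg) (b : Gpos) :
    ⁅D.negHom (ι K Gneg a), D.posHom (ι K Gpos b)⁆ = D.zeroHom (D.br a b) := by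
  change D.adj (i₋ (inl K Gzero Gneg (ι K Gneg a))) (i₊ (inl K Gzero Gpos (ι K Gpos b))) = _
  rw [adj_nonpos, nonposRep_ι, negGen_pos, negDer_ι]
  rfl

theorem lie_zeroHom_negHom_ι (g : Gzero) (a : Gneg) :
    ⁅D.zeroHom g, D.negHom (ι K Gneg a)⁆ = D.negHom (ι K Gneg ⁅g, a⁆) := by
  rw [zeroHom, negHom, LieHom.comp_apply, LieHom.comp_apply, LieHom.comp_apply, ← LieHom.map_lie,
    lie_inr_inl, act_ι]

theorem lie_zeroHom_posHom_ι (g : Gzero) (b : Gpos) :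
    ⁅D.zeroHom g, D.posHom (ι K Gpos b)⁆ = D.posHom (ι K Gpos ⁅g, b⁆) := by
  change ⁅D.nonnegHom (inr K Gzero Gpos g), D.nonnegHom (inl K Gzero Gpos (ι K Gpos b))⁆ = _
  rw [← LieHom.map_lie, lie_inr_inl, act_ι]
  rfl

/-- The realization of the maximal graded extension on `Free(Gneg) ⊕ Gzero ⊕ Free(Gpos)`. -/
def maxGradedExtension : MaxGradedExtension K Gneg Gzero Gpos D where
  L := D.LMax
  comp := D.gradedPart
  isInternal := isInternal_comp K Gneg Gzero Gpos
  graded_bracket _ _ _ hv _ hw := D.adj_mem_comp hv hw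
  eneg := LinearEquiv.ofInjective _ (D.negHom_injective.comp ι_injective) ≪≫ₗ
    LinearEquiv.ofEq _ _ D.gradedPart_neg_one.symm
  ezero := LinearEquiv.ofInjective _ D.zeroHom_injective ≪≫ₗ
    LinearEquiv.ofEq _ _ D.gradedPart_zero.symm
  epos := LinearEquiv.ofInjective _ (D.posHom_injective.comp ι_injective) ≪≫ₗ
    LinearEquiv.ofEq _ _ D.gradedPart_one.symm
  zero_bracket := D.zeroHom.map_lie
  act_neg g a := (D.lie_zeroHom_negHom_ι g a).symm
  act_pos g b := (D.lie_zeroHom_posHom_ι g b).symm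
  br_compat a b := (D.lie_negHom_posHom_ι a b).symm
  pos_gen n hn v hv := by
    rw [D.gradedPart_of_pos (by lia)] at hv
    rw [lieSpan_gradedPart_one]
    exact LinearMap.map_le_range hv
  pos_free _ _ _ φ := existsUnique_hom_of_eq_range D.posHom_injective D.lieSpan_gradedPart_one φ
  neg_gen n hn v hv := by
    rw [D.gradedPart_of_neg (by lia)] at hv
    rw [lieSpan_gradedPart_neg_one]
    exact LinearMap.map_le_range hv
  neg_free _ _ _ φ := existsUnique_hom_of_eq_range D.negHom_injective D.lieSpan_gradedPart_neg_one φ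

end LocalLieData

end

/-- For every local Lie algebra `G = Gneg ⊕ Gzero ⊕ Gpos` there exists a maximal
`ℤ`-graded Lie algebra `L_max(G)`, with underlying graded space
`Free(Gneg) ⊕ Gzero ⊕ Free(Gpos)`, whose local part is `G` and whose bracket extends
the given local bracket. -/
theorem exists_maxGradedExtension (K Gneg Gzero Gpos : Type) [Field K]
    [LieRing Gzero] [LieAlgebra K Gzero]
    [AddCommGroup Gneg] [Module K Gneg] [LieRingModule Gzero Gneg] [LieModule K Gzero Gneg]
    [AddCommGroup Gpos] [Module K Gpos] [LieRingModule Gzero Gpos] [LieModule K Gzero Gpos]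
    (D : LocalLieData K Gneg Gzero Gpos) :
    Nonempty (MaxGradedExtension K Gneg Gzero Gpos D) :=
  ⟨D.maxGradedExtension⟩
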